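/- Fix φ ∈ (0,1) and γ₁, γ₂ > 0, and define Δ(γ₁,γ₂) := (2 − γ₁ − γ₂ + γ₁γ₂φ)² − 4(1 − γ₁)(1 − γ₂) and its partial derivative in γ₂, D(γ₁,γ₂) := 2(2 − γ₁ − γ₂ + γ₁γ₂φ)(γ₁φ − 1) + 4(1 − γ₁). If Δ(γ₁,γ₂) ≥ 0, then: if γ₁ ≥ 1, 2√(Δ(γ₁,γ₂))·|γ₁φ − 1| ≤ |D(γ₁,γ₂)|; and if γ₁ ∈ (0,1), 2√(Δ(γ₁,γ₂))·|γ₁φ − 1| ≥ |D(γ₁,γ₂)|. -/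

import Mathlib

theorem stmt13 (φ γ₁ γ₂ : ℝ) (hφ : φ ∈ Set.Ioo (0 : ℝ) 1)
    (hγ₁ : 0 < γ₁) (hγ₂ : 0 < γ₂)
    (hΔ : 0 ≤ (2 - γ₁ - γ₂ + γ₁ * γ₂ * φ) ^ 2 - 4 * (1 - γ₁) * (1 - γ₂)) :
    (1 ≤ γ₁ →
      2 * Real.sqrt ((2 - γ₁ - γ₂ + γ₁ * γ₂ * φ) ^ 2 - 4 * (1 - γ₁) * (1 - γ₂))
          * |γ₁ * φ - 1|
        ≤ |2 * (2 - γ₁ - γ₂ + γ₁ * γ₂ * φ) * (γ₁ * φ - 1) + 4 * (1 - γ₁)|) ∧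
    (γ₁ ∈ Set.Ioo (0 : ℝ) 1 →
      |2 * (2 - γ₁ - γ₂ + γ₁ * γ₂ * φ) * (γ₁ * φ - 1) + 4 * (1 - γ₁)|
        ≤ 2 * Real.sqrt ((2 - γ₁ - γ₂ + γ₁ * γ₂ * φ) ^ 2 - 4 * (1 - γ₁) * (1 - γ₂))
          * |γ₁ * φ - 1|) := by
  obtain ⟨h0, h1⟩ := hφ
  have hp : 0 ≤ γ₁ ^ 2 * (φ * (1 - φ)) :=
    mul_nonneg (sq_nonneg _) (mul_nonneg h0.le (by linarith))
  have hs := Real.sq_sqrt hΔ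
  have hn := Real.sqrt_nonneg ((2 - γ₁ - γ₂ + γ₁ * γ₂ * φ) ^ 2 - 4 * (1 - γ₁) * (1 - γ₂))
  have key : (2 * (2 - γ₁ - γ₂ + γ₁ * γ₂ * φ) * (γ₁ * φ - 1) + 4 * (1 - γ₁)) ^ 2
      - (2 * Real.sqrt ((2 - γ₁ - γ₂ + γ₁ * γ₂ * φ) ^ 2 - 4 * (1 - γ₁) * (1 - γ₂))
          * |γ₁ * φ - 1|) ^ 2 = 16 * ((γ₁ - 1) * (γ₁ ^ 2 * (φ * (1 - φ)))) := by
    rw [mul_pow, mul_pow, hs, sq_abs]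
    ring
  constructor
  · intro h
    have := mul_nonneg (sub_nonneg.2 h) hp
    refine le_trans (le_abs_self _) (sq_le_sq.1 ?_)
    linarith
  · intro h
    have := mul_nonneg (sub_nonneg.2 h.2.le) hp
    apply abs_le_of_sq_le_sq <;> first | positivity | linarith
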